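/- arXiv:1609.03914 — 2 statements merged into one kernel-verified Lean document; each statement's English description precedes it below -/
import Mathlib

section
/- Suppose c > b. Define the Furstenberg IFS F = {f_i(z) = (b/c)z + d_i/c}_{i=1}^N on ℝ and its natural projection Π_AF(𝐢) = d_{i_1}/c + Σ_{k≥2} (d_{i_k}/c)·∏_{ℓ=1}^{k-1}(b/c). If the combined natural projection 𝐢 ↦ (Π(𝐢), Π_AF(𝐢)) from Σ to ℝ³ is injective, then the IFS S satisfies the transversality condition. -/
open MeasureTheory Filter Set Topology
open scoped ENNReal

noncomputable section

/-- One triangular affine map `S_i(x,y) = (c x + u_i, d_i x + b y + v_i)`. -/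
def Smap {N : ℕ} (c b : ℝ) (u v d : Fin N → ℝ) (i : Fin N) (p : ℝ × ℝ) : ℝ × ℝ :=
  (c * p.1 + u i, d i * p.1 + b * p.2 + v i)

/-- Composition along a finite word: `Sword [i₁,…,iₙ] = S_{i₁} ∘ ⋯ ∘ S_{iₙ}`. -/
def Sword {N : ℕ} (c b : ℝ) (u v d : Fin N → ℝ) : List (Fin N) → (ℝ × ℝ) → ℝ × ℝ
  | [] => id
  | i :: w => Smap c b u v d i ∘ Sword c b u v d w

/-- The closed unit square `[0,1]²`. -/
def unitSq : Set (ℝ × ℝ) := Set.Icc 0 1 ×ˢ Set.Icc 0 1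

/-- The length-`n` prefix of an infinite word, as a list. -/
def prefixWord {N : ℕ} (i : ℕ → Fin N) (n : ℕ) : List (Fin N) :=
  List.ofFn (fun k : Fin n => i k)

/-- The transversality condition: there is `c₃ > 0` such that for every `n` and all
`𝐢, 𝐣` with different first symbols, the projection to the `x`-axis of the intersection
of the two level-`n` cylinder parallelograms has diameter `< c₃ bⁿ`. -/
def Transversality (N : ℕ) (c b : ℝ) (u v d : Fin N → ℝ) : Prop :=
  ∃ c₃ > (0 : ℝ), ∀ (n : ℕ) (i j : ℕ → Fin N), i 0 ≠ j 0 →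
    Metric.diam (Prod.fst '' (Sword c b u v d (prefixWord i n) '' unitSq ∩
      Sword c b u v d (prefixWord j n) '' unitSq)) < c₃ * b ^ n

/-- The natural projection of the Furstenberg IFS `{z ↦ (b/c) z + dᵢ/c}`. -/
def PiAF {N : ℕ} (c b : ℝ) (d : Fin N → ℝ) (i : ℕ → Fin N) : ℝ :=
  ∑' k : ℕ, (d (i k) / c) * (b / c) ^ k

/-!
The linear part of `Sword w` is `(c ^ n, 0; c ^ n * σ, b ^ n)` with `n = w.length`, so the cylinder
of `w` lies in a strip of slope `σ` and vertical width `b ^ n`; here `σ` is the partial sum of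
`PiAF` along `w`. If two cylinders meet, any two common points `p`, `q` satisfy
`|σ - σ'| * |p.1 - q.1| ≤ 2 * b ^ n`, so it remains to separate the slopes. By compactness,
injectivity keeps the limits `(Pi i, PiAF i)` and `(Pi j, PiAF j)` at distance at least some `δ > 0`
when `i 0 ≠ j 0`, and by uniform convergence the level-`n` approximations inherit this. The
positions of two cylinders that meet are within `O(c ^ n)` of each other, hence the slopes must
differ.
-/

section Separation

variable {Z X : Type*} [TopologicalSpace Z] [CompactSpace Z] [MetricSpace X]

lemma exists_pos_le_dist_of_isClosed {F : Z → X} (hF : Continuous F) {s : Set (Z × Z)}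
    (hs : IsClosed s) (hsep : ∀ z ∈ s, F z.1 ≠ F z.2) :
    ∃ δ > 0, ∀ z ∈ s, δ ≤ dist (F z.1) (F z.2) :=
  hs.isCompact.exists_forall_le' (by fun_prop) fun z hz => dist_pos.2 (hsep z hz)

lemma exists_pos_eventually_le_dist {ι : Type*} {l : Filter ι} [l.NeBot] {G : ι → Z → X}
    {F : Z → X} (hG : ∀ n, Continuous (G n)) (hGF : TendstoUniformly G F l) {s : Set (Z × Z)}
    (hs : IsClosed s) (hsep : ∀ z ∈ s, F z.1 ≠ F z.2) :
    ∃ δ > 0, ∀ᶠ n in l, ∀ z ∈ s, δ ≤ dist (G n z.1) (G n z.2) := by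
  have hF : Continuous F := hGF.continuous (Frequently.of_forall hG)
  obtain ⟨δ, hδ, hFδ⟩ := exists_pos_le_dist_of_isClosed hF hs hsep
  refine ⟨δ / 2, by positivity, ?_⟩
  filter_upwards [Metric.tendstoUniformly_iff.1 hGF (δ / 4) (by positivity)] with n hn z hz
  have htri := dist_triangle4 (F z.1) (G n z.1) (G n z.2) (F z.2)
  rw [dist_comm (G n z.2)] at htri
  linarith [hFδ z hz, hn z.1, hn z.2]

end Separation

lemma isClosed_setOf_apply_ne {ι α : Type*} [TopologicalSpace α] [DiscreteTopology α] (k : ι) :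
    IsClosed {z : (ι → α) × (ι → α) | z.1 k ≠ z.2 k} := by
  have hcont : Continuous fun z : (ι → α) × (ι → α) => (z.1 k, z.2 k) := by fun_prop
  exact (isClosed_discrete {a : α × α | a.1 ≠ a.2}).preimage hcont

lemma abs_sub_le_one_of_mem_Icc {x y : ℝ} (hx : x ∈ Icc (0 : ℝ) 1) (hy : y ∈ Icc (0 : ℝ) 1) :
    |x - y| ≤ 1 := by
  simpa using abs_sub_le_of_le_of_le hx.1 hx.2 hy.1 hy.2

lemma dist_zero_le_one_of_mem_unitSq {p : ℝ × ℝ} (hp : p ∈ unitSq) : dist p 0 ≤ 1 :=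
  max_le (abs_sub_le_one_of_mem_Icc hp.1 (by simp)) (abs_sub_le_one_of_mem_Icc hp.2 (by simp))

lemma diam_fst_image_le {s : Set (ℝ × ℝ)} {r : ℝ} (hr : 0 ≤ r)
    (h : ∀ p ∈ s, ∀ q ∈ s, |p.1 - q.1| ≤ r) : Metric.diam (Prod.fst '' s) ≤ r := by
  refine Metric.diam_le_of_forall_dist_le hr ?_
  rintro _ ⟨p, hp, rfl⟩ _ ⟨q, hq, rfl⟩
  exact h p hp q hq

section Words

variable {N : ℕ}

@[simp]
lemma length_prefixWord (i : ℕ → Fin N) (n : ℕ) : (prefixWord i n).length = n :=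
  List.length_ofFn

lemma prefixWord_succ (i : ℕ → Fin N) (n : ℕ) :
    prefixWord i (n + 1) = prefixWord i n ++ [i n] := by
  simpa only [prefixWord, Fin.val_castSucc, Fin.val_last] using
    List.ofFn_succ_last (f := fun k : Fin (n + 1) => i k)

lemma continuous_comp_prefixWord {X : Type*} [TopologicalSpace X] (F : List (Fin N) → X) (n : ℕ) :
    Continuous fun i : ℕ → Fin N => F (prefixWord i n) := by
  have hrestrict : Continuous fun (i : ℕ → Fin N) (k : Fin n) => i k := by fun_prop
  exact (continuous_of_discreteTopology (f := fun w : Fin n → Fin N => F (List.ofFn w))).comp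
    hrestrict

end Words

/-- The slope of the image of a horizontal segment under `Sword w`, computed by applying the
Furstenberg maps `z ↦ (b / c) * z + d i / c` along `w` to the slope `0`. -/
def wordSlope {N : ℕ} (c b : ℝ) (d : Fin N → ℝ) : List (Fin N) → ℝ
  | [] => 0
  | i :: w => d i / c + b / c * wordSlope c b d w

/-- The intersection of the cylinder parallelograms of two words. -/
def cylinderOverlap {N : ℕ} (c b : ℝ) (u v d : Fin N → ℝ) (w w' : List (Fin N)) : Set (ℝ × ℝ) :=
  Sword c b u v d w '' unitSq ∩ Sword c b u v d w' '' unitSq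

section Slope

variable {N : ℕ} {c b : ℝ} {d : Fin N → ℝ}

lemma mul_wordSlope_cons (hc : c ≠ 0) (a : Fin N) (w : List (Fin N)) :
    c * wordSlope c b d (a :: w) = d a + b * wordSlope c b d w := by
  simp only [wordSlope]
  field_simp

lemma wordSlope_append (w w' : List (Fin N)) :
    wordSlope c b d (w ++ w') =
      wordSlope c b d w + (b / c) ^ w.length * wordSlope c b d w' := by
  induction w with
  | nil => simp [wordSlope]
  | cons a w ih =>
    simp only [List.cons_append, wordSlope, ih, List.length_cons]
    ring

lemma wordSlope_prefixWord (i : ℕ → Fin N) (n : ℕ) :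
    wordSlope c b d (prefixWord i n) = ∑ k ∈ Finset.range n, d (i k) / c * (b / c) ^ k := by
  induction n with
  | zero => simp [prefixWord, wordSlope]
  | succ n ih =>
    rw [prefixWord_succ, wordSlope_append, ih, Finset.sum_range_succ, length_prefixWord]
    simp only [wordSlope]
    ring

/-- The bound is the fixed point of `M ↦ (b / c) * M + ‖d‖ / c`. -/
lemma abs_wordSlope_le (hb : 0 ≤ b) (hbc : b < c) (w : List (Fin N)) :
    |wordSlope c b d w| ≤ ‖d‖ / (c - b) := by
  have hc : 0 < c := hb.trans_lt hbc
  have hcb : 0 < c - b := sub_pos.2 hbc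
  induction w with
  | nil => simpa [wordSlope] using div_nonneg (norm_nonneg d) hcb.le
  | cons a w ih =>
    calc |d a / c + b / c * wordSlope c b d w|
        ≤ |d a| / c + b / c * |wordSlope c b d w| := by
          refine (abs_add_le _ _).trans_eq ?_
          rw [abs_div, abs_mul, abs_of_pos hc, abs_of_nonneg (div_nonneg hb hc.le)]
      _ ≤ ‖d‖ / c + b / c * (‖d‖ / (c - b)) := by
          gcongr
          exact norm_le_pi_norm d a
      _ = ‖d‖ / (c - b) := by field_simp; ring

lemma tendstoUniformly_wordSlope (hb : 0 ≤ b) (hbc : b < c) :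
    TendstoUniformly (fun n i => wordSlope c b d (prefixWord i n)) (PiAF c b d) atTop := by
  have hc : 0 < c := hb.trans_lt hbc
  have hratio : 0 ≤ b / c := div_nonneg hb hc.le
  have hsum : Summable fun k : ℕ => ‖d‖ / c * (b / c) ^ k :=
    (summable_geometric_of_lt_one hratio ((div_lt_one hc).2 hbc)).mul_left _
  simp only [wordSlope_prefixWord]
  refine tendstoUniformly_tsum_nat hsum fun k i => ?_
  rw [norm_mul, norm_div, norm_pow, Real.norm_of_nonneg hc.le, Real.norm_of_nonneg hratio]
  gcongr
  exact norm_le_pi_norm d (i k)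

end Slope

section Cylinders

variable {N : ℕ} {c b : ℝ} {u v d : Fin N → ℝ}

lemma Sword_append (w w' : List (Fin N)) (p : ℝ × ℝ) :
    Sword c b u v d (w ++ w') p = Sword c b u v d w (Sword c b u v d w' p) := by
  induction w with
  | nil => rfl
  | cons a w ih => exact congrArg (Smap c b u v d a) ih

lemma Sword_sub (hc : c ≠ 0) (w : List (Fin N)) (p q : ℝ × ℝ) :
    Sword c b u v d w p - Sword c b u v d w q =
      (c ^ w.length * (p.1 - q.1),
        c ^ w.length * wordSlope c b d w * (p.1 - q.1) + b ^ w.length * (p.2 - q.2)) := by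
  induction w with
  | nil => simp [Sword, wordSlope, Prod.ext_iff]
  | cons a w ih =>
    obtain ⟨hfst, hsnd⟩ := Prod.ext_iff.1 ih
    simp only [Prod.fst_sub, Prod.snd_sub] at hfst hsnd
    simp only [Sword, Function.comp_apply, Smap, List.length_cons, Prod.mk_sub_mk, Prod.mk.injEq]
    constructor
    · linear_combination c * hfst
    · linear_combination d a * hfst + b * hsnd -
        c ^ w.length * (p.1 - q.1) * mul_wordSlope_cons (b := b) (d := d) hc a w

lemma dist_Sword_le (hb : 0 ≤ b) (hbc : b < c) (w : List (Fin N)) (p q : ℝ × ℝ) :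
    dist (Sword c b u v d w p) (Sword c b u v d w q) ≤
      (‖d‖ / (c - b) + 1) * c ^ w.length * dist p q := by
  have hc : 0 < c := hb.trans_lt hbc
  have hslope : |wordSlope c b d w| ≤ ‖d‖ / (c - b) := abs_wordSlope_le hb hbc w
  have hslope_nonneg : 0 ≤ ‖d‖ / (c - b) := (abs_nonneg _).trans hslope
  have hfst : |p.1 - q.1| ≤ dist p q := le_max_left _ _
  have hsnd : |p.2 - q.2| ≤ dist p q := le_max_right _ _
  rw [dist_eq_norm, Sword_sub hc.ne', Prod.norm_mk, Real.norm_eq_abs, Real.norm_eq_abs]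
  refine max_le ?_ ?_
  · rw [abs_mul, abs_of_pos (pow_pos hc _)]
    calc c ^ w.length * |p.1 - q.1| = 1 * c ^ w.length * |p.1 - q.1| := by ring
      _ ≤ (‖d‖ / (c - b) + 1) * c ^ w.length * dist p q := by gcongr; linarith
  · calc |c ^ w.length * wordSlope c b d w * (p.1 - q.1) + b ^ w.length * (p.2 - q.2)|
        ≤ c ^ w.length * |wordSlope c b d w| * |p.1 - q.1| + b ^ w.length * |p.2 - q.2| := by
          refine (abs_add_le _ _).trans_eq ?_
          rw [abs_mul, abs_mul, abs_mul, abs_of_pos (pow_pos hc _),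
            abs_of_nonneg (pow_nonneg hb _)]
      _ ≤ c ^ w.length * (‖d‖ / (c - b)) * dist p q + c ^ w.length * dist p q := by gcongr
      _ = (‖d‖ / (c - b) + 1) * c ^ w.length * dist p q := by ring

lemma dist_Sword_prefixWord_succ_le (hb : 0 ≤ b) (hbc : b < c) (i : ℕ → Fin N) (n : ℕ) :
    dist (Sword c b u v d (prefixWord i n) 0) (Sword c b u v d (prefixWord i (n + 1)) 0) ≤
      (‖d‖ / (c - b) + 1) * ‖(u, v)‖ * c ^ n := by
  have hc : 0 < c := hb.trans_lt hbc
  have : 0 < c - b := sub_pos.2 hbc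
  have htranslation : dist 0 (Sword c b u v d [i n] 0) ≤ ‖(u, v)‖ := by
    rw [dist_zero_left]
    simpa [Sword, Smap] using max_le_max (norm_le_pi_norm u (i n)) (norm_le_pi_norm v (i n))
  rw [prefixWord_succ, Sword_append]
  calc _ ≤ (‖d‖ / (c - b) + 1) * c ^ n * dist 0 (Sword c b u v d [i n] 0) := by
        simpa only [length_prefixWord] using
          dist_Sword_le hb hbc (prefixWord i n) 0 (Sword c b u v d [i n] 0)
    _ ≤ (‖d‖ / (c - b) + 1) * c ^ n * ‖(u, v)‖ := by gcongr
    _ = (‖d‖ / (c - b) + 1) * ‖(u, v)‖ * c ^ n := by ring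

lemma tendstoUniformly_Sword (hb : 0 ≤ b) (hbc : b < c) (hc1 : c < 1)
    {Pi : (ℕ → Fin N) → ℝ × ℝ}
    (hPi : ∀ i, Tendsto (fun n => Sword c b u v d (prefixWord i n) 0) atTop (nhds (Pi i))) :
    TendstoUniformly (fun n i => Sword c b u v d (prefixWord i n) 0) Pi atTop := by
  set K := (‖d‖ / (c - b) + 1) * ‖(u, v)‖
  have hrate (n : ℕ) (i : ℕ → Fin N) :
      dist (Sword c b u v d (prefixWord i n) 0) (Pi i) ≤ K * c ^ n / (1 - c) :=
    dist_le_of_le_geometric_of_tendsto c K hc1 (dist_Sword_prefixWord_succ_le hb hbc i) (hPi i) n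
  have hzero : Tendsto (fun n : ℕ => K * c ^ n / (1 - c)) atTop (nhds 0) := by
    simpa using ((tendsto_pow_atTop_nhds_zero_of_lt_one (hb.trans hbc.le) hc1).const_mul
      K).div_const (1 - c)
  rw [Metric.tendstoUniformly_iff]
  intro ε hε
  filter_upwards [hzero.eventually_lt_const hε] with n hn i
  rw [dist_comm]
  exact (hrate n i).trans_lt hn

lemma abs_snd_sub_wordSlope_mul_le (hb : 0 ≤ b) (hc : c ≠ 0) {w : List (Fin N)} {p q : ℝ × ℝ}
    (hp : p ∈ Sword c b u v d w '' unitSq) (hq : q ∈ Sword c b u v d w '' unitSq) :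
    |(p.2 - q.2) - wordSlope c b d w * (p.1 - q.1)| ≤ b ^ w.length := by
  obtain ⟨x, hx, rfl⟩ := hp
  obtain ⟨y, hy, rfl⟩ := hq
  obtain ⟨hfst, hsnd⟩ := Prod.ext_iff.1 (Sword_sub (b := b) (u := u) (v := v) (d := d) hc w x y)
  rw [← Prod.fst_sub, ← Prod.snd_sub, hfst, hsnd]
  calc _ = |b ^ w.length * (x.2 - y.2)| := by ring_nf
    _ = b ^ w.length * |x.2 - y.2| := by rw [abs_mul, abs_of_nonneg (pow_nonneg hb _)]
    _ ≤ b ^ w.length :=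
      mul_le_of_le_one_right (pow_nonneg hb _) (abs_sub_le_one_of_mem_Icc hx.2 hy.2)

lemma abs_wordSlope_sub_mul_abs_fst_sub_le (hb : 0 ≤ b) (hc : c ≠ 0) {w w' : List (Fin N)}
    {p q : ℝ × ℝ} (hp : p ∈ cylinderOverlap c b u v d w w')
    (hq : q ∈ cylinderOverlap c b u v d w w') :
    |wordSlope c b d w - wordSlope c b d w'| * |p.1 - q.1| ≤ b ^ w.length + b ^ w'.length := by
  have hstrip := abs_snd_sub_wordSlope_mul_le hb hc hp.1 hq.1
  have hstrip' := abs_snd_sub_wordSlope_mul_le hb hc hp.2 hq.2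
  calc |wordSlope c b d w - wordSlope c b d w'| * |p.1 - q.1|
      = |((p.2 - q.2) - wordSlope c b d w' * (p.1 - q.1)) -
          ((p.2 - q.2) - wordSlope c b d w * (p.1 - q.1))| := by rw [← abs_mul]; ring_nf
    _ ≤ b ^ w'.length + b ^ w.length := (abs_sub _ _).trans (add_le_add hstrip' hstrip)
    _ = b ^ w.length + b ^ w'.length := add_comm _ _

lemma dist_Sword_zero_le_of_mem_cylinderOverlap (hb : 0 ≤ b) (hbc : b < c)
    {w w' : List (Fin N)} {p : ℝ × ℝ} (hp : p ∈ cylinderOverlap c b u v d w w') :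
    dist (Sword c b u v d w 0) (Sword c b u v d w' 0) ≤
      (‖d‖ / (c - b) + 1) * (c ^ w.length + c ^ w'.length) := by
  have : 0 < c := hb.trans_lt hbc
  have : 0 < c - b := sub_pos.2 hbc
  have hradius (w : List (Fin N)) (hw : p ∈ Sword c b u v d w '' unitSq) :
      dist p (Sword c b u v d w 0) ≤ (‖d‖ / (c - b) + 1) * c ^ w.length := by
    obtain ⟨x, hx, rfl⟩ := hw
    exact (dist_Sword_le hb hbc w x 0).trans
      (mul_le_of_le_one_right (by positivity) (dist_zero_le_one_of_mem_unitSq hx))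
  linarith [dist_triangle_left (Sword c b u v d w 0) (Sword c b u v d w' 0) p,
    hradius w hp.1, hradius w' hp.2]

lemma diam_fst_image_cylinderOverlap_le_one (hc : 0 < c) (hc1 : c ≤ 1) (w w' : List (Fin N)) :
    Metric.diam (Prod.fst '' cylinderOverlap c b u v d w w') ≤ 1 := by
  refine diam_fst_image_le zero_le_one ?_
  rintro _ ⟨⟨x, hx, rfl⟩, -⟩ _ ⟨⟨y, hy, rfl⟩, -⟩
  rw [← Prod.fst_sub, Sword_sub hc.ne', abs_mul, abs_of_pos (pow_pos hc _)]
  exact mul_le_one₀ (pow_le_one₀ hc.le hc1) (abs_nonneg _) (abs_sub_le_one_of_mem_Icc hx.1 hy.1)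

lemma diam_fst_image_cylinderOverlap_le_div (hb : 0 ≤ b) (hc : c ≠ 0) {w w' : List (Fin N)}
    {δ : ℝ} (hδ : 0 < δ)
    (hslope : (cylinderOverlap c b u v d w w').Nonempty →
      δ ≤ |wordSlope c b d w - wordSlope c b d w'|) :
    Metric.diam (Prod.fst '' cylinderOverlap c b u v d w w') ≤
      (b ^ w.length + b ^ w'.length) / δ := by
  refine diam_fst_image_le (by positivity) fun p hp q hq => ?_
  rw [le_div_iff₀' hδ]
  exact (mul_le_mul_of_nonneg_right (hslope ⟨p, hp⟩) (abs_nonneg _)).trans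
    (abs_wordSlope_sub_mul_abs_fst_sub_le hb hc hp hq)

lemma transversality_of_eventually (hb : 0 < b) (hb1 : b ≤ 1) (hc : 0 < c) (hc1 : c ≤ 1) {C : ℝ}
    (hC : ∀ᶠ n in atTop, ∀ i j : ℕ → Fin N, i 0 ≠ j 0 →
      Metric.diam (Prod.fst '' cylinderOverlap c b u v d (prefixWord i n) (prefixWord j n)) ≤
        C * b ^ n) :
    Transversality N c b u v d := by
  obtain ⟨n₀, hn₀⟩ := eventually_atTop.1 hC
  refine ⟨max C (b ^ n₀)⁻¹ + 1, by positivity, fun n i j hij => ?_⟩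
  suffices hle : Metric.diam
      (Prod.fst '' cylinderOverlap c b u v d (prefixWord i n) (prefixWord j n)) ≤
        max C (b ^ n₀)⁻¹ * b ^ n from
    hle.trans_lt (mul_lt_mul_of_pos_right (lt_add_one _) (pow_pos hb n))
  rcases le_or_gt n₀ n with hn | hn
  · exact (hn₀ n hn i j hij).trans (by gcongr; exact le_max_left _ _)
  · calc _ ≤ (1 : ℝ) := diam_fst_image_cylinderOverlap_le_one hc hc1 _ _
      _ = (b ^ n₀)⁻¹ * b ^ n₀ := (inv_mul_cancel₀ (pow_pos hb n₀).ne').symm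
      _ ≤ max C (b ^ n₀)⁻¹ * b ^ n :=
        mul_le_mul (le_max_right _ _) (pow_le_pow_of_le_one hb.le hb1 hn.le) (by positivity)
          (by positivity)

lemma exists_pos_eventually_le_abs_wordSlope_sub (hb : 0 ≤ b) (hbc : b < c) (hc1 : c < 1)
    {Pi : (ℕ → Fin N) → ℝ × ℝ}
    (hPi : ∀ i, Tendsto (fun n => Sword c b u v d (prefixWord i n) 0) atTop (nhds (Pi i)))
    (hsep : ∀ i j : ℕ → Fin N, i 0 ≠ j 0 → (Pi i, PiAF c b d i) ≠ (Pi j, PiAF c b d j)) :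
    ∃ δ > 0, ∀ᶠ n in atTop, ∀ i j : ℕ → Fin N, i 0 ≠ j 0 →
      (cylinderOverlap c b u v d (prefixWord i n) (prefixWord j n)).Nonempty →
        δ ≤ |wordSlope c b d (prefixWord i n) - wordSlope c b d (prefixWord j n)| := by
  have hunif := (tendstoUniformly_Sword hb hbc hc1 hPi).prodMk
    (tendstoUniformly_wordSlope (d := d) hb hbc)
  obtain ⟨δ, hδ, hfar⟩ := exists_pos_eventually_le_dist
    (fun n => continuous_comp_prefixWord (fun w => (Sword c b u v d w 0, wordSlope c b d w)) n)
    (fun s hs => (hunif s hs).diag_of_prod)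
    (isClosed_setOf_apply_ne 0) fun z hz => hsep z.1 z.2 hz
  have hzero : Tendsto (fun n : ℕ => (‖d‖ / (c - b) + 1) * (c ^ n + c ^ n)) atTop (nhds 0) := by
    have hpow := tendsto_pow_atTop_nhds_zero_of_lt_one (hb.trans hbc.le) hc1
    simpa using (hpow.add hpow).const_mul (‖d‖ / (c - b) + 1)
  refine ⟨δ, hδ, ?_⟩
  filter_upwards [hfar, hzero.eventually_lt_const hδ] with n hfar hsmall i j hij ⟨p, hp⟩
  have hnear := dist_Sword_zero_le_of_mem_cylinderOverlap hb hbc hp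
  simp only [length_prefixWord] at hnear
  exact (le_max_iff.1 (hfar (i, j) hij)).resolve_left (not_le.2 (hnear.trans_lt hsmall))

end Cylinders

theorem statement0_general {N : ℕ} {b c : ℝ} (hb : 0 < b) (hbc : b < c) (hc1 : c < 1)
    {u v d : Fin N → ℝ} {Pi : (ℕ → Fin N) → ℝ × ℝ}
    (hPi : ∀ i, Tendsto (fun n => Sword c b u v d (prefixWord i n) 0) atTop (nhds (Pi i)))
    (hsep : ∀ i j : ℕ → Fin N, i 0 ≠ j 0 → (Pi i, PiAF c b d i) ≠ (Pi j, PiAF c b d j)) :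
    Transversality N c b u v d := by
  have hc : 0 < c := hb.trans hbc
  obtain ⟨δ, hδ, hslope⟩ := exists_pos_eventually_le_abs_wordSlope_sub hb.le hbc hc1 hPi hsep
  refine transversality_of_eventually (C := 2 / δ) hb (hbc.trans hc1).le hc hc1.le ?_
  filter_upwards [hslope] with n hslope i j hij
  calc _ ≤ (b ^ n + b ^ n) / δ := by
        simpa only [length_prefixWord] using
          diam_fst_image_cylinderOverlap_le_div hb.le hc.ne' hδ (hslope i j hij)
    _ = 2 / δ * b ^ n := by ring

/-- if the combined natural projection `𝐢 ↦ (Π(𝐢), Π_AF(𝐢))` is injective,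
then the IFS `S` satisfies the transversality condition. -/
theorem statement0 (N : ℕ) (hN : 2 ≤ N) (b c : ℝ)
    (hb0 : 0 < b) (hb1 : b < 1) (hc0 : 0 < c) (hc1 : c < 1)
    (u v d : Fin N → ℝ)
    (hmaps : ∀ i, Smap c b u v d i '' unitSq ⊆ unitSq)
    (hcb : b < c)
    (Pi : (ℕ → Fin N) → ℝ × ℝ)
    (hPi : ∀ i, Tendsto (fun n => Sword c b u v d (prefixWord i n) 0) atTop (nhds (Pi i)))
    (hinj : Function.Injective (fun i => (Pi i, PiAF c b d i))) :
    Transversality N c b u v d :=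
  statement0_general hb0 hcb hc1 hPi fun _ _ hij heq => hij (congrFun (hinj heq) 0)

end
end

section
/- Suppose c > b. Define the three-dimensional IFS S̃ = {S̃_i(x,y,z) = (S_i(x,y), (b z + d_i)/c)}_{i=1}^N on ℝ³. If S satisfies the transversality condition and moreover S_i([0,1]²) ⊂ (0,1)² for all i = 1,…,N, then S̃ satisfies the strong separation property: there exists a nonempty open set V ⊂ ℝ³ with S̃_i(V) ⊂ V for all i and with the closures of S̃_i(V) and S̃_j(V) disjoint for all i ≠ j. -/
open MeasureTheory Filter Set Topology
open scoped ENNReal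

noncomputable section

/-- The lifted three-dimensional IFS `S̃_i(x,y,z) = (S_i(x,y), (b z + d_i)/c)`. -/
def Stilde {N : ℕ} (c b : ℝ) (u v d : Fin N → ℝ) (i : Fin N) (p : ℝ × ℝ × ℝ) :
    ℝ × ℝ × ℝ :=
  ((Smap c b u v d i (p.1, p.2.1)).1, (Smap c b u v d i (p.1, p.2.1)).2,
    (b * p.2.2 + d i) / c)

/-!
The third coordinate of `S̃` records a slope: the linear part of `S_i` sends the direction
`(1, z)` to a multiple of `(1, (b z + d_i)/c)`, so `S_i` carries the line through `(x, y)` of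
slope `z` to the line encoded by `S̃_i(x, y, z)` and scales horizontal distances by `c`.

Since the `S_i` map the closed square into its interior, some compact box `K` of base points at
distance at least `δ` from the boundary of the square and slopes at most `R` in absolute value
is mapped into itself by every `S̃_i`. If `S̃_w p = S̃_w' q` for points `p`, `q` of `K` and
words `w`, `w'` of length `n`, then the segments in the square through `p` and `q` have images
overlapping in a segment of horizontal length at least `cⁿ δ / R`. As `b < c`, for large `n`
this contradicts transversality when `w` and `w'` start with different letters. Hence the `n`-th
Hutchinson iterate of the interior of `K` is the required open set.
-/

section Hutchinson

variable {ι X : Type*}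

/-- The Hutchinson operator `A ↦ ⋃ i, f i (A)` of a family of self-maps, whose iterates approximate
the attractor of the family. -/
def hutchinson (f : ι → X → X) (A : Set X) : Set X := ⋃ i, f i '' A

lemma hutchinson_mono (f : ι → X → X) : Monotone (hutchinson f) :=
  fun _ _ h ↦ iUnion_mono fun _ ↦ image_mono h

lemma mem_iterate_hutchinson {f : ι → X → X} {A : Set X} {n : ℕ} {x : X} :
    x ∈ (hutchinson f)^[n] A ↔ ∃ w : List ι, w.length = n ∧ ∃ a ∈ A, w.foldr f a = x := by
  induction n generalizing x with
  | zero => simp [List.length_eq_zero_iff]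
  | succ n ih =>
    simp only [Function.iterate_succ_apply', hutchinson, mem_iUnion, mem_image]
    constructor
    · rintro ⟨i, y, hy, rfl⟩
      obtain ⟨w, rfl, a, ha, rfl⟩ := ih.1 hy
      exact ⟨i :: w, rfl, a, ha, rfl⟩
    · rintro ⟨_ | ⟨i, w⟩, hw, a, ha, rfl⟩
      · cases hw
      · exact ⟨i, w.foldr f a, ih.2 ⟨w, Nat.succ.inj hw, a, ha, rfl⟩, rfl⟩

lemma iterate_hutchinson_nonempty [Nonempty ι] (f : ι → X → X) {A : Set X} (hA : A.Nonempty)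
    (n : ℕ) : ((hutchinson f)^[n] A).Nonempty := by
  obtain ⟨a, ha⟩ := hA
  exact ⟨_, mem_iterate_hutchinson.2
    ⟨List.replicate n (Classical.arbitrary ι), List.length_replicate, a, ha, rfl⟩⟩

lemma mapsTo_iterate_hutchinson {f : ι → X → X} {A : Set X} (h : ∀ i, MapsTo (f i) A A) (n : ℕ)
    (i : ι) : MapsTo (f i) ((hutchinson f)^[n] A) ((hutchinson f)^[n] A) := by
  have hA : hutchinson f A ⊆ A := iUnion_subset fun i ↦ (h i).image_subset
  have hstep : hutchinson f ((hutchinson f)^[n] A) ⊆ (hutchinson f)^[n] A := by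
    rw [← Function.iterate_succ_apply' (hutchinson f), Function.iterate_succ_apply]
    exact (hutchinson_mono f).iterate n hA
  exact mapsTo_iff_image_subset.2 ((subset_iUnion _ i).trans hstep)

variable [TopologicalSpace X]

lemma isOpen_iterate_hutchinson {f : ι → X → X} (hf : ∀ i, IsOpenMap (f i)) {U : Set X}
    (hU : IsOpen U) (n : ℕ) : IsOpen ((hutchinson f)^[n] U) :=
  Function.Iterate.rec IsOpen hU (fun _ hA ↦ isOpen_iUnion fun i ↦ hf i _ hA) n

lemma isCompact_iterate_hutchinson [Finite ι] {f : ι → X → X} (hf : ∀ i, Continuous (f i))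
    {K : Set X} (hK : IsCompact K) (n : ℕ) : IsCompact ((hutchinson f)^[n] K) :=
  Function.Iterate.rec IsCompact hK (fun _ hA ↦ isCompact_iUnion fun i ↦ hA.image (hf i)) n

theorem exists_isOpen_mapsTo_disjoint_closure [Finite ι] [Nonempty ι] [T2Space X]
    {f : ι → X → X} (hcont : ∀ i, Continuous (f i)) (hopen : ∀ i, IsOpenMap (f i))
    {K : Set X} (hK : IsCompact K) (hne : (interior K).Nonempty) (hmaps : ∀ i, MapsTo (f i) K K)
    {n : ℕ} (hdisj : Pairwise fun i j ↦
      Disjoint (f i '' (hutchinson f)^[n] K) (f j '' (hutchinson f)^[n] K)) :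
    ∃ V : Set X, V.Nonempty ∧ IsOpen V ∧ (∀ i, MapsTo (f i) V V) ∧
      Pairwise fun i j ↦ Disjoint (closure (f i '' V)) (closure (f j '' V)) := by
  have hint (i : ι) : MapsTo (f i) (interior K) (interior K) := (hopen i).mapsTo_interior (hmaps i)
  have hclosure (i : ι) :
      closure (f i '' (hutchinson f)^[n] (interior K)) ⊆ f i '' (hutchinson f)^[n] K :=
    closure_minimal (image_mono ((hutchinson_mono f).iterate n interior_subset))
      ((isCompact_iterate_hutchinson hcont hK n).image (hcont i)).isClosed
  exact ⟨(hutchinson f)^[n] (interior K), iterate_hutchinson_nonempty f hne n,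
    isOpen_iterate_hutchinson hopen isOpen_interior n, mapsTo_iterate_hutchinson hint n,
    fun i j hij ↦ (hdisj hij).mono (hclosure i) (hclosure j)⟩

end Hutchinson

lemma exists_subset_Icc_prod_Icc {s : Set (ℝ × ℝ)} (hs : IsClosed s)
    (h : s ⊆ Ioo 0 1 ×ˢ Ioo 0 1) :
    ∃ δ ∈ Ioo (0 : ℝ) (1 / 2), s ⊆ Icc δ (1 - δ) ×ˢ Icc δ (1 - δ) := by
  have hball : Ioo (0 : ℝ) 1 ×ˢ Ioo (0 : ℝ) 1 = Metric.ball (1 / 2, 1 / 2) (1 / 2) := by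
    rw [← ball_prod_same, Real.ball_eq_Ioo]
    norm_num
  obtain ⟨r, ⟨hr0, hr⟩, hsr⟩ := exists_pos_lt_subset_ball one_half_pos hs (hball ▸ h)
  refine ⟨1 / 2 - r, ⟨by linarith, by linarith⟩,
    (hsr.trans Metric.ball_subset_closedBall).trans_eq ?_⟩
  rw [← closedBall_prod_same, Real.closedBall_eq_Icc]
  ring_nf

/-- The point at signed horizontal distance `t` from `(x, y)` on the line through `(x, y)` of slope
`z`. A point `(x, y, z)` of the space on which the lifted system acts is read as this line with its
base point. -/
def linePoint (p : ℝ × ℝ × ℝ) (t : ℝ) : ℝ × ℝ := (p.1 + t, p.2.1 + p.2.2 * t)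

/-- A box of lines: the base point lies in the unit square at distance at least `δ` from its
boundary, and the slope is at most `R` in absolute value. -/
def lineBox (δ R : ℝ) : Set (ℝ × ℝ × ℝ) := Icc δ (1 - δ) ×ˢ Icc δ (1 - δ) ×ˢ Icc (-R) R

section LineBox

variable {δ R : ℝ}

lemma isCompact_lineBox : IsCompact (lineBox δ R) :=
  isCompact_Icc.prod (isCompact_Icc.prod isCompact_Icc)

lemma interior_lineBox_nonempty (hδ : δ < 1 / 2) (hR : 0 < R) :
    (interior (lineBox δ R)).Nonempty := by
  have hδ' : δ < 1 - δ := by linarith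
  simp only [lineBox, interior_prod_eq, interior_Icc, prod_nonempty_iff, nonempty_Ioo]
  exact ⟨hδ', hδ', neg_lt_self hR⟩

lemma linePoint_mem_unitSq {p : ℝ × ℝ × ℝ} {t : ℝ} (hp : p ∈ lineBox δ R) (ht : |t| ≤ δ)
    (hRt : R * |t| ≤ δ) : linePoint p t ∈ unitSq := by
  obtain ⟨⟨hx, hx'⟩, ⟨hy, hy'⟩, hz⟩ := hp
  have hrise : |p.2.2 * t| ≤ δ := by
    rw [abs_mul]
    exact (mul_le_mul_of_nonneg_right (abs_le.2 hz) (abs_nonneg t)).trans hRt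
  rw [abs_le] at ht hrise
  exact ⟨⟨by dsimp [linePoint]; linarith, by dsimp [linePoint]; linarith⟩,
    ⟨by dsimp [linePoint]; linarith, by dsimp [linePoint]; linarith⟩⟩

end LineBox

section TriangularIFS

variable {N : ℕ} {c b : ℝ} {u v d : Fin N → ℝ}

lemma isCompact_unitSq : IsCompact unitSq := isCompact_Icc.prod isCompact_Icc

lemma continuous_Smap (i : Fin N) : Continuous (Smap c b u v d i) := by
  unfold Smap
  fun_prop

lemma continuous_Sword (w : List (Fin N)) : Continuous (Sword c b u v d w) := by
  induction w with
  | nil => exact continuous_id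
  | cons i w ih => exact (continuous_Smap i).comp ih

lemma continuous_Stilde (i : Fin N) : Continuous (Stilde c b u v d i) := by
  unfold Stilde Smap
  fun_prop

lemma isOpenMap_Stilde (hc : c ≠ 0) (hb : b ≠ 0) (i : Fin N) :
    IsOpenMap (Stilde c b u v d i) := by
  let inverse : ℝ × ℝ × ℝ → ℝ × ℝ × ℝ := fun p ↦
    ((p.1 - u i) / c, (p.2.1 - v i - d i * ((p.1 - u i) / c)) / b, (c * p.2.2 - d i) / b)
  have hcont : Continuous inverse := by fun_prop
  refine IsOpenMap.of_inverse hcont (fun p ↦ ?_) (fun p ↦ ?_) <;>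
  · simp only [inverse, Stilde, Smap]
    ext <;> field_simp <;> ring

lemma exists_one_le_forall_abs_le_mul (hbc : b < c) (d : Fin N → ℝ) :
    ∃ R, 1 ≤ R ∧ ∀ i, |d i| ≤ (c - b) * R :=
  ((eventually_ge_atTop 1).and <| eventually_all.2 fun i ↦
    (tendsto_id.const_mul_atTop (sub_pos.2 hbc)).eventually_ge_atTop |d i|).exists

lemma mapsTo_Stilde_lineBox (hb : 0 ≤ b) (hc : 0 < c) {δ R : ℝ} (hδ : 0 ≤ δ) {i : Fin N}
    (hS : Smap c b u v d i '' unitSq ⊆ Icc δ (1 - δ) ×ˢ Icc δ (1 - δ))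
    (hR : |d i| ≤ (c - b) * R) :
    MapsTo (Stilde c b u v d i) (lineBox δ R) (lineBox δ R) := by
  rintro ⟨x, y, z⟩ ⟨hx, hy, hz⟩
  have hunit : Icc δ (1 - δ) ⊆ Icc 0 1 := Icc_subset_Icc hδ (sub_le_self 1 hδ)
  have hbase := hS (mem_image_of_mem _ (show (x, y) ∈ unitSq from ⟨hunit hx, hunit hy⟩))
  have hslope : |(b * z + d i) / c| ≤ R := by
    rw [abs_div, abs_of_pos hc, div_le_iff₀ hc]
    calc |b * z + d i| ≤ b * |z| + |d i| := by
          simpa only [abs_mul, abs_of_nonneg hb] using abs_add_le (b * z) (d i)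
      _ ≤ b * R + (c - b) * R := add_le_add (mul_le_mul_of_nonneg_left (abs_le.2 hz) hb) hR
      _ = R * c := by ring
  exact ⟨hbase.1, hbase.2, abs_le.1 hslope⟩

lemma Smap_linePoint (hc : c ≠ 0) (i : Fin N) (p : ℝ × ℝ × ℝ) (t : ℝ) :
    Smap c b u v d i (linePoint p t) = linePoint (Stilde c b u v d i p) (c * t) := by
  simp only [Smap, linePoint, Stilde]
  ext <;> field_simp <;> ring

lemma Sword_linePoint (hc : c ≠ 0) (w : List (Fin N)) (p : ℝ × ℝ × ℝ) (t : ℝ) :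
    Sword c b u v d w (linePoint p t) =
      linePoint (w.foldr (Stilde c b u v d) p) (c ^ w.length * t) := by
  induction w with
  | nil => simp [Sword]
  | cons i w ih =>
    rw [Sword, Function.comp_apply, ih, Smap_linePoint hc, List.foldr_cons, List.length_cons,
      pow_succ', mul_assoc]

lemma le_diam_fst_image_inter_of_foldr_Stilde_eq (hc : 0 < c) {δ R : ℝ} (hδ : 0 ≤ δ) (hR : 1 ≤ R)
    {w w' : List (Fin N)} (hlen : w'.length = w.length) {p q : ℝ × ℝ × ℝ}
    (hp : p ∈ lineBox δ R) (hq : q ∈ lineBox δ R)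
    (h : w.foldr (Stilde c b u v d) p = w'.foldr (Stilde c b u v d) q) :
    c ^ w.length * (δ / R) ≤ Metric.diam (Prod.fst ''
      (Sword c b u v d w '' unitSq ∩ Sword c b u v d w' '' unitSq)) := by
  set P := w.foldr (Stilde c b u v d) p
  set overlap := Sword c b u v d w '' unitSq ∩ Sword c b u v d w' '' unitSq
  have hR0 : 0 < R := one_pos.trans_le hR
  have hmem {t : ℝ} (ht0 : 0 ≤ t) (ht : t ≤ δ / R) :
      P.1 + c ^ w.length * t ∈ Prod.fst '' overlap := by
    have habs : |t| ≤ δ := (abs_of_nonneg ht0).trans_le (ht.trans (div_le_self hδ hR))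
    have hRt : R * |t| ≤ δ := by rwa [abs_of_nonneg ht0, mul_comm, ← le_div_iff₀ hR0]
    refine ⟨linePoint P (c ^ w.length * t),
      ⟨⟨linePoint p t, linePoint_mem_unitSq hp habs hRt, Sword_linePoint hc.ne' w p t⟩,
        ⟨linePoint q t, linePoint_mem_unitSq hq habs hRt, ?_⟩⟩, rfl⟩
    rw [Sword_linePoint hc.ne', ← h, hlen]
  have hbdd : Bornology.IsBounded (Prod.fst '' overlap) :=
    ((isCompact_unitSq.image (continuous_Sword w)).image continuous_fst).isBounded.subset
      (image_mono inter_subset_left)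
  have hτ : 0 ≤ δ / R := div_nonneg hδ hR0.le
  calc c ^ w.length * (δ / R)
      = dist (P.1 + c ^ w.length * (δ / R)) (P.1 + c ^ w.length * 0) := by
        rw [dist_add_left, mul_zero, dist_zero_right, Real.norm_of_nonneg (by positivity)]
    _ ≤ Metric.diam (Prod.fst '' overlap) :=
        Metric.dist_le_diam_of_mem hbdd (hmem hτ le_rfl) (hmem le_rfl hτ)

lemma prefixWord_getD (w : List (Fin N)) (a : Fin N) :
    prefixWord (fun k ↦ w.getD k a) w.length = w := by
  refine List.ext_getElem (by simp [prefixWord]) fun k _ hk ↦ ?_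
  simp only [prefixWord, List.getElem_ofFn, List.getD_eq_getElem _ _ hk]

lemma exists_diam_cons_lt_of_transversality (h : Transversality N c b u v d) :
    ∃ c₃ > 0, ∀ (i j : Fin N) (w w' : List (Fin N)), i ≠ j → w'.length = w.length →
      Metric.diam (Prod.fst '' (Sword c b u v d (i :: w) '' unitSq ∩
        Sword c b u v d (j :: w') '' unitSq)) < c₃ * b ^ (w.length + 1) := by
  obtain ⟨c₃, hc₃, hdiam⟩ := h
  refine ⟨c₃, hc₃, fun i j w w' hij hlen ↦ ?_⟩
  have hw := prefixWord_getD (i :: w) i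
  have hw' := prefixWord_getD (j :: w') j
  rw [List.length_cons] at hw hw'
  have hlt := hdiam (w.length + 1) (fun k ↦ (i :: w).getD k i) (fun k ↦ (j :: w').getD k j) hij
  rwa [hw, ← hlen, hw', hlen] at hlt

lemma exists_mul_pow_succ_le (hb : 0 ≤ b) (hbc : b < c) {C ε : ℝ} (hC : 0 < C) (hε : 0 < ε) :
    ∃ n : ℕ, C * b ^ (n + 1) ≤ c ^ (n + 1) * ε := by
  have hev := (isLittleO_pow_pow_of_lt_left hb hbc).def (div_pos hε hC)
  obtain ⟨n, hn⟩ := ((tendsto_add_atTop_nat 1).eventually hev).exists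
  have hc : 0 ≤ c := hb.trans hbc.le
  rw [Real.norm_of_nonneg (by positivity), Real.norm_of_nonneg (by positivity),
    div_mul_eq_mul_div, le_div_iff₀ hC] at hn
  exact ⟨n, by linarith⟩

theorem exists_pairwise_disjoint_image_iterate_hutchinson (hb : 0 ≤ b) (hbc : b < c)
    (htrans : Transversality N c b u v d) {δ R : ℝ} (hδ : 0 < δ) (hR : 1 ≤ R) :
    ∃ n, Pairwise fun i j ↦
      Disjoint (Stilde c b u v d i '' (hutchinson (Stilde c b u v d))^[n] (lineBox δ R))
        (Stilde c b u v d j '' (hutchinson (Stilde c b u v d))^[n] (lineBox δ R)) := by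
  obtain ⟨c₃, hc₃, hdiam⟩ := exists_diam_cons_lt_of_transversality htrans
  obtain ⟨n, hn⟩ := exists_mul_pow_succ_le hb hbc hc₃ (div_pos hδ (one_pos.trans_le hR))
  refine ⟨n, fun i j hij ↦ disjoint_left.2 ?_⟩
  rintro _ ⟨x, hx, rfl⟩ ⟨y, hy, hyx⟩
  obtain ⟨w, rfl, p, hp, rfl⟩ := mem_iterate_hutchinson.1 hx
  obtain ⟨w', hlen, q, hq, rfl⟩ := mem_iterate_hutchinson.1 hy
  have hlower := le_diam_fst_image_inter_of_foldr_Stilde_eq (hb.trans_lt hbc) hδ.le hR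
    (w := i :: w) (w' := j :: w') (congrArg (· + 1) hlen) hp hq hyx.symm
  exact (hlower.trans_lt (hdiam i j w w' hij hlen)).not_ge hn

end TriangularIFS

/-- if `S` satisfies transversality and maps the unit square into the open
unit square, then the lifted IFS `S̃` satisfies the strong separation property. -/
theorem statement1 (N : ℕ) (hN : 2 ≤ N) (b c : ℝ)
    (hb0 : 0 < b) (hb1 : b < 1) (hc0 : 0 < c) (hc1 : c < 1)
    (u v d : Fin N → ℝ)
    (hmaps : ∀ i, Smap c b u v d i '' unitSq ⊆ unitSq)
    (hcb : b < c)
    (htrans : Transversality N c b u v d)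
    (hopen : ∀ i, Smap c b u v d i '' unitSq ⊆ Set.Ioo 0 1 ×ˢ Set.Ioo 0 1) :
    ∃ V : Set (ℝ × ℝ × ℝ), V.Nonempty ∧ IsOpen V ∧
      (∀ i, Stilde c b u v d i '' V ⊆ V) ∧
      (∀ i j, i ≠ j →
        closure (Stilde c b u v d i '' V) ∩ closure (Stilde c b u v d j '' V) = ∅) := by
  have : Nonempty (Fin N) := ⟨⟨0, two_pos.trans_le hN⟩⟩
  have hclosed : IsClosed (⋃ i, Smap c b u v d i '' unitSq) :=
    isClosed_iUnion_of_finite fun i ↦ (isCompact_unitSq.image (continuous_Smap i)).isClosed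
  obtain ⟨δ, ⟨hδ0, hδ⟩, hSδ⟩ := exists_subset_Icc_prod_Icc hclosed (iUnion_subset hopen)
  obtain ⟨R, hR1, hR⟩ := exists_one_le_forall_abs_le_mul hcb d
  obtain ⟨n, hdisj⟩ :=
    exists_pairwise_disjoint_image_iterate_hutchinson hb0.le hcb htrans hδ0 hR1
  obtain ⟨V, hne, hV, hmapsV, hsep⟩ := exists_isOpen_mapsTo_disjoint_closure continuous_Stilde
    (isOpenMap_Stilde hc0.ne' hb0.ne') isCompact_lineBox
    (interior_lineBox_nonempty hδ (one_pos.trans_le hR1))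
    (fun i ↦ mapsTo_Stilde_lineBox hb0.le hc0 hδ0.le ((subset_iUnion _ i).trans hSδ) (hR i)) hdisj
  exact ⟨V, hne, hV, fun i ↦ (hmapsV i).image_subset,
    fun i j hij ↦ disjoint_iff_inter_eq_empty.1 (hsep hij)⟩

end
end
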